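/- arXiv:2509.06360 — 2 statements merged into one kernel-verified Lean document; each statement's English description precedes it below -/
import Mathlib

section
/- For r > 0, define the trigonometric moments over the uniform distribution on [−r, r]: c_+ = (1/(2r))∫_{−r}^{r} cos⁴α dα, c_− = (1/(2r))∫_{−r}^{r} sin⁴α dα, c_0 = (1/(2r))∫_{−r}^{r} cos²α sin²α dα, k_+ = (1/(2r))∫_{−r}^{r} cos²α dα, k_− = (1/(2r))∫_{−r}^{r} sin²α dα. Then c_+ − k_+² = c_− − k_−² = −(c_0 − k_+k_−) = (−1 + 4r² + cos(4r) + r·sin(4r))/(32r²), and this common value is strictly positive for every r > 0. -/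
/-!
Write `U` for the uniform distribution on `[-r, r]`. The three expressions are the variance of
`cos²`, the variance of `sin²` and minus the covariance of `cos²` and `sin²` under `U`; they agree
because `sin² = 1 - cos²`, whatever the distribution. Since `cos² α = (1 + cos 2α) / 2`, their
common value is a quarter of the variance of `cos 2α`, which only involves integrals of cosines.
It is positive because a nonconstant continuous function on an interval has positive variance.
-/

open MeasureTheory ProbabilityTheory Set

namespace TrigMoments

section Cond

lemma restrict_absolutelyContinuous_cond {X : Type*} [MeasurableSpace X] {μ : Measure X}
    {s : Set X} (hs : μ s ≠ ⊤) : μ.restrict s ≪ μ[|s] :=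
  Measure.absolutelyContinuous_smul (ENNReal.inv_ne_zero.mpr hs)

variable {X : Type*} [TopologicalSpace X] [MeasurableSpace X] [OpensMeasurableSpace X]
  {μ : Measure X} {s : Set X}

lemma memLp_cond_of_continuousOn {E : Type*} [NormedAddCommGroup E] {f : X → E} {p : ENNReal}
    (hs : IsCompact s) (hsm : MeasurableSet s) (hf : ContinuousOn f s) :
    MemLp f p μ[|s] := by
  obtain ⟨C, hC⟩ := hs.exists_bound_of_continuousOn hf
  have hmeas : AEStronglyMeasurable f μ[|s] :=
    (hf.aestronglyMeasurable_of_isCompact hs hsm).mono_ac Measure.smul_absolutelyContinuous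
  exact .of_bound hmeas C (ae_cond_of_forall_mem hsm hC)

lemma variance_cond_pos [μ.IsOpenPosMeasure] [IsFiniteMeasureOnCompacts μ] {f : X → ℝ}
    (hs : IsCompact s) (hsm : MeasurableSet s) (hsi : s ⊆ closure (interior s))
    (hf : ContinuousOn f s) {x y : X} (hx : x ∈ s) (hy : y ∈ s) (hxy : f x ≠ f y) :
    0 < Var[f; μ[|s]] := by
  refine (variance_nonneg f _).lt_of_ne' fun hvar ↦ hxy ?_
  have hconst : ∀ᵐ z ∂μ.restrict s, f z = (μ[|s])[f] :=
    (restrict_absolutelyContinuous_cond hs.measure_lt_top.ne).ae_le <|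
      ae_eq_integral_of_variance_eq_zero (memLp_cond_of_continuousOn hs hsm hf) hvar
  have heq : EqOn f (fun _ ↦ (μ[|s])[f]) s :=
    Measure.eqOn_of_ae_eq hconst hf continuousOn_const hsi
  exact (heq hx).trans (heq hy).symm

end Cond

section RandomAngle

variable (μ : Measure ℝ) [IsProbabilityMeasure μ]

lemma variance_sin_sq : Var[fun x ↦ Real.sin x ^ 2; μ] = Var[fun x ↦ Real.cos x ^ 2; μ] := by
  simp_rw [Real.sin_sq]
  exact variance_const_sub (by fun_prop) 1

lemma covariance_cos_sq_sin_sq :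
    cov[fun x ↦ Real.cos x ^ 2, fun x ↦ Real.sin x ^ 2; μ] = -Var[fun x ↦ Real.cos x ^ 2; μ] := by
  have hint : Integrable (fun x ↦ Real.cos x ^ 2) μ :=
    .of_bound (by fun_prop) 1 <| .of_forall fun x ↦ by simpa using Real.abs_cos_le_one x
  simp_rw [Real.sin_sq]
  rw [covariance_const_sub_right hint, covariance_self (by fun_prop)]

lemma variance_cos_sq_eq_variance_cos_two_mul :
    Var[fun x ↦ Real.cos x ^ 2; μ] = Var[fun x ↦ Real.cos (2 * x); μ] / 4 := by
  have hhalf : (fun x ↦ Real.cos x ^ 2) = fun x ↦ 1 / 2 + 1 / 2 * Real.cos (2 * x) := by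
    ext x
    rw [Real.cos_sq]
    ring
  rw [hhalf, variance_const_add (by fun_prop), variance_const_mul]
  ring

end RandomAngle

section UniformInterval

variable {a b : ℝ}

lemma isProbabilityMeasure_cond_Icc (hab : a < b) :
    IsProbabilityMeasure (volume[|Icc a b] : Measure ℝ) :=
  cond_isProbabilityMeasure_of_finite (by simpa using hab) (by simp)

lemma memLp_cond_Icc {E : Type*} [NormedAddCommGroup E] {f : ℝ → E} {p : ENNReal}
    (hf : ContinuousOn f (Icc a b)) : MemLp f p volume[|Icc a b] :=
  memLp_cond_of_continuousOn isCompact_Icc measurableSet_Icc hf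

lemma integral_cond_Icc {E : Type*} [NormedAddCommGroup E] [NormedSpace ℝ E]
    (hab : a ≤ b) (f : ℝ → E) :
    ∫ x, f x ∂volume[|Icc a b] = (b - a)⁻¹ • ∫ x in a..b, f x := by
  rw [ProbabilityTheory.cond, integral_smul_measure, integral_Icc_eq_integral_Ioc,
    intervalIntegral.integral_of_le hab, Real.volume_Icc, ENNReal.toReal_inv,
    ENNReal.toReal_ofReal (sub_nonneg.mpr hab)]

variable {r : ℝ}

lemma integral_cond_Icc_neg_self (hr : 0 ≤ r) (f : ℝ → ℝ) :
    ∫ x, f x ∂volume[|Icc (-r) r] = 1 / (2 * r) * ∫ x in (-r)..r, f x := by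
  rw [integral_cond_Icc (by linarith), smul_eq_mul, sub_neg_eq_add, ← two_mul, one_div]

lemma integral_cos_mul_cond_Icc (hr : 0 ≤ r) {c : ℝ} (hc : c ≠ 0) :
    ∫ x, Real.cos (c * x) ∂volume[|Icc (-r) r] = Real.sin (c * r) / (c * r) := by
  rw [integral_cond_Icc_neg_self hr, intervalIntegral.integral_comp_mul_left _ hc, integral_cos,
    mul_neg, Real.sin_neg, smul_eq_mul]
  field

lemma variance_cos_mul_cond_Icc (hr : 0 < r) {c : ℝ} (hc : c ≠ 0) :
    Var[fun x ↦ Real.cos (c * x); volume[|Icc (-r) r]] =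
      1 / 2 + Real.sin (2 * c * r) / (4 * c * r) - (Real.sin (c * r) / (c * r)) ^ 2 := by
  have := isProbabilityMeasure_cond_Icc (show -r < r by linarith)
  have hL2 : MemLp (fun x ↦ Real.cos (c * x)) 2 volume[|Icc (-r) r] :=
    memLp_cond_Icc (by fun_prop)
  have hint : Integrable (fun x ↦ Real.cos (2 * c * x)) volume[|Icc (-r) r] :=
    (memLp_cond_Icc (by fun_prop)).integrable le_rfl
  have hsq : ∫ x, Real.cos (c * x) ^ 2 ∂volume[|Icc (-r) r] =
      1 / 2 + Real.sin (2 * c * r) / (4 * c * r) := by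
    simp_rw [Real.cos_sq, ← mul_assoc]
    rw [integral_add (integrable_const _) (hint.div_const 2), integral_const, integral_div,
      integral_cos_mul_cond_Icc hr.le (mul_ne_zero two_ne_zero hc), probReal_univ, one_smul]
    ring
  simp only [variance_eq_sub hL2, Pi.pow_apply, hsq, integral_cos_mul_cond_Icc hr.le hc]

lemma variance_cos_sq_cond_Icc (hr : 0 < r) :
    Var[fun x ↦ Real.cos x ^ 2; volume[|Icc (-r) r]] =
      (-1 + 4 * r ^ 2 + Real.cos (4 * r) + r * Real.sin (4 * r)) / (32 * r ^ 2) := by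
  have := isProbabilityMeasure_cond_Icc (show -r < r by linarith)
  have hsin : Real.sin (2 * r) ^ 2 = (1 - Real.cos (4 * r)) / 2 := by
    rw [Real.sin_sq_eq_half_sub]
    ring_nf
  rw [variance_cos_sq_eq_variance_cos_two_mul, variance_cos_mul_cond_Icc hr two_ne_zero, div_pow,
    hsin]
  norm_num only
  field

lemma variance_cos_sq_cond_Icc_pos (hr : 0 < r) :
    0 < Var[fun x ↦ Real.cos x ^ 2; volume[|Icc (-r) r]] := by
  -- `r` may be a multiple of `π`, so compare `0` with a point of `(0, π)`.
  have hx : 0 < min r 1 := lt_min hr one_pos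
  have hsin : 0 < Real.sin (min r 1) :=
    Real.sin_pos_of_pos_of_lt_pi hx (by linarith [min_le_right r 1, Real.pi_gt_three])
  have hcos : Real.cos (min r 1) ^ 2 < Real.cos 0 ^ 2 := by
    rw [Real.cos_zero, Real.cos_sq']
    linarith [pow_pos hsin 2]
  exact variance_cond_pos isCompact_Icc measurableSet_Icc
    (closure_interior_Icc (show -r < r by linarith).ne).ge (by fun_prop)
    ⟨by linarith, min_le_left r 1⟩ ⟨by linarith, hr.le⟩ hcos.ne

end UniformInterval

end TrigMoments

open TrigMoments

/-- The trigonometric moments of the uniform distribution on `[−r, r]` satisfy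
`c₊ − k₊² = c₋ − k₋² = −(c₀ − k₊k₋) = (−1 + 4r² + cos 4r + r sin 4r)/(32r²) > 0`. -/
theorem trig_moments_identity (r : ℝ) (hr : 0 < r) :
    ((1 / (2 * r)) * ∫ α in (-r)..r, Real.cos α ^ 4) -
        ((1 / (2 * r)) * ∫ α in (-r)..r, Real.cos α ^ 2) ^ 2 =
      (-1 + 4 * r ^ 2 + Real.cos (4 * r) + r * Real.sin (4 * r)) / (32 * r ^ 2) ∧
    ((1 / (2 * r)) * ∫ α in (-r)..r, Real.sin α ^ 4) -
        ((1 / (2 * r)) * ∫ α in (-r)..r, Real.sin α ^ 2) ^ 2 =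
      (-1 + 4 * r ^ 2 + Real.cos (4 * r) + r * Real.sin (4 * r)) / (32 * r ^ 2) ∧
    -(((1 / (2 * r)) * ∫ α in (-r)..r, Real.cos α ^ 2 * Real.sin α ^ 2) -
        ((1 / (2 * r)) * ∫ α in (-r)..r, Real.cos α ^ 2) *
          ((1 / (2 * r)) * ∫ α in (-r)..r, Real.sin α ^ 2)) =
      (-1 + 4 * r ^ 2 + Real.cos (4 * r) + r * Real.sin (4 * r)) / (32 * r ^ 2) ∧
    0 < (-1 + 4 * r ^ 2 + Real.cos (4 * r) + r * Real.sin (4 * r)) / (32 * r ^ 2) := by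
  have := isProbabilityMeasure_cond_Icc (show -r < r by linarith)
  have hcos : MemLp (fun x ↦ Real.cos x ^ 2) 2 volume[|Icc (-r) r] :=
    memLp_cond_Icc (by fun_prop)
  have hsin : MemLp (fun x ↦ Real.sin x ^ 2) 2 volume[|Icc (-r) r] :=
    memLp_cond_Icc (by fun_prop)
  have hvar_cos := variance_eq_sub hcos
  have hvar_sin := variance_eq_sub hsin
  have hcov := covariance_eq_sub hcos hsin
  simp only [Pi.pow_apply, Pi.mul_apply, ← pow_mul, Nat.reduceMul] at hvar_cos hvar_sin hcov
  simp only [← integral_cond_Icc_neg_self hr.le]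
  rw [← hvar_cos, ← hvar_sin, ← hcov, variance_sin_sq, covariance_cos_sq_sin_sq, neg_neg,
    ← variance_cos_sq_cond_Icc hr]
  exact ⟨rfl, rfl, rfl, variance_cos_sq_cond_Icc_pos hr⟩
end

section
/- Let σ be an N×N complex matrix that is Hermitian and satisfies σ² = I (a Hermitian involution), let ρ be an N×N positive semidefinite Hermitian matrix, let ψ ∈ ℂ^N be a unit vector, and let r > 0. For α ∈ ℝ define U(α) = cos(α)·I − i·sin(α)·σ. Then the variance of α ↦ ⟨ψ, U(α)† ρ U(α) ψ⟩ over α uniform on [−r, r] is at least (c_+ − k_+²)·(⟨ψ, ρ ψ⟩ − ⟨ψ, σρσ ψ⟩)², where c_+ = (1/(2r))∫_{−r}^{r} cos⁴α dα and k_+ = (1/(2r))∫_{−r}^{r} cos²α dα. -/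
open Matrix MeasureTheory ProbabilityTheory
open scoped ComplexOrder

/-!
Averaging a random variable over a measure-preserving map does not increase its variance, so for
a symmetric law of `α` the variance of `α ↦ ⟨ψ, U(α)† ρ U(α) ψ⟩` is at least that of its even part.
Since `U(±α) ψ = cos α · ψ ∓ i sin α · σψ`, the parallelogram law cancels the cross terms in this
even part, leaving `cos² α ⟨ψ, ρψ⟩ + sin² α ⟨σψ, ρσψ⟩`. By `sin² = 1 - cos²` this is an affine
function of `cos² α` with slope `⟨ψ, ρψ⟩ - ⟨σψ, ρσψ⟩`.
-/

section Variance

variable {Ω : Type*} [MeasurableSpace Ω] {μ : Measure Ω} {X Y : Ω → ℝ}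

lemma variance_add_le_two_mul [IsFiniteMeasure μ] (hX : MemLp X 2 μ) (hY : MemLp Y 2 μ) :
    Var[X + Y; μ] ≤ 2 * (Var[X; μ] + Var[Y; μ]) := by
  have hsub_nonneg := variance_nonneg (X - Y) μ
  rw [variance_sub hX hY] at hsub_nonneg
  rw [variance_add hX hY]
  linarith

lemma variance_comp_measurePreserving {Ω' : Type*} [MeasurableSpace Ω'] {μ' : Measure Ω'}
    {T : Ω' → Ω} (hT : MeasurePreserving T μ' μ) (hX : AEMeasurable X μ) :
    Var[X ∘ T; μ'] = Var[X; μ] := by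
  rw [← variance_map (by rwa [hT.map_eq]) hT.aemeasurable, hT.map_eq]

lemma variance_midpoint_comp_le [IsFiniteMeasure μ] {T : Ω → Ω} (hT : MeasurePreserving T μ μ)
    (hX : MemLp X 2 μ) :
    Var[fun ω => 2⁻¹ * (X ω + X (T ω)); μ] ≤ Var[X; μ] := by
  have hsum := variance_add_le_two_mul hX (hX.comp_measurePreserving hT)
  rw [variance_comp_measurePreserving hT hX.aemeasurable] at hsum
  calc Var[fun ω => 2⁻¹ * (X ω + X (T ω)); μ] = 2⁻¹ ^ 2 * Var[X + X ∘ T; μ] :=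
        variance_const_mul _ _ _
    _ ≤ Var[X; μ] := by linarith

end Variance

section ProbabilityOnReal

lemma memLp_of_continuous_of_periodic {E : Type*} [NormedAddCommGroup E] {f : ℝ → E} {T : ℝ}
    (hf : Continuous f) (hper : Function.Periodic f T) (hT : T ≠ 0)
    (μ : Measure ℝ) [IsFiniteMeasure μ] (p : ENNReal) : MemLp f p μ := by
  obtain ⟨C, hC⟩ := (hper.isBounded_of_continuous hT hf).exists_norm_le
  exact .of_bound hf.aestronglyMeasurable C (.of_forall fun x => hC _ (Set.mem_range_self x))

lemma memLp_cos_sq (μ : Measure ℝ) [IsFiniteMeasure μ] (p : ENNReal) :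
    MemLp (fun α => Real.cos α ^ 2) p μ :=
  memLp_of_continuous_of_periodic (by fun_prop) (fun α => by simp only [Real.cos_add_two_pi])
    Real.two_pi_pos.ne' μ p

lemma variance_cos_sq (μ : Measure ℝ) [IsProbabilityMeasure μ] :
    Var[fun α => Real.cos α ^ 2; μ] =
      ∫ α, Real.cos α ^ 4 ∂μ - (∫ α, Real.cos α ^ 2 ∂μ) ^ 2 := by
  rw [variance_eq_sub (memLp_cos_sq μ 2)]
  simp only [Pi.pow_apply, ← pow_mul, Nat.reduceMul]

lemma isProbabilityMeasure_cond_Icc {a b : ℝ} (hab : a < b) :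
    IsProbabilityMeasure (volume[|Set.Icc a b]) :=
  cond_isProbabilityMeasure_of_finite (by simpa using hab) measure_Icc_lt_top.ne

lemma integral_cond_Icc {E : Type*} [NormedAddCommGroup E] [NormedSpace ℝ E] {a b : ℝ}
    (hab : a ≤ b) (f : ℝ → E) :
    ∫ x, f x ∂(volume[|Set.Icc a b]) = (b - a)⁻¹ • ∫ x in a..b, f x := by
  rw [ProbabilityTheory.cond, integral_smul_measure, integral_Icc_eq_integral_Ioc,
    ← intervalIntegral.integral_of_le hab, Real.volume_Icc, ENNReal.toReal_inv,
    ENNReal.toReal_ofReal (sub_nonneg.2 hab)]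

lemma isNegInvariant_cond {G : Type*} [MeasurableSpace G] [InvolutiveNeg G] [MeasurableNeg G]
    {μ : Measure G} [μ.IsNegInvariant] {s : Set G} (hs : -s = s) : (μ[|s]).IsNegInvariant := by
  have hrestrict : MeasurePreserving Neg.neg (μ.restrict s) (μ.restrict s) := by
    have h := (Measure.measurePreserving_neg μ).restrict_preimage_emb
      (MeasurableEquiv.neg G).measurableEmbedding s
    rwa [Set.neg_preimage, hs] at h
  exact ⟨(hrestrict.smul_measure (μ s)⁻¹).map_eq⟩

instance isNegInvariant_cond_Icc_neg_self (r : ℝ) :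
    (volume[|Set.Icc (-r) r]).IsNegInvariant :=
  isNegInvariant_cond (by rw [Set.neg_Icc, neg_neg])

lemma cond_Icc_neg_self (r : ℝ) :
    volume[|Set.Icc (-r) r] =
      (ENNReal.ofReal (2 * r))⁻¹ • volume.restrict (Set.Icc (-r) r) := by
  rw [ProbabilityTheory.cond, Real.volume_Icc, sub_neg_eq_add, two_mul]

lemma integral_cond_Icc_neg_self {r : ℝ} (hr : 0 ≤ r) (f : ℝ → ℝ) :
    ∫ x, f x ∂(volume[|Set.Icc (-r) r]) = 1 / (2 * r) * ∫ x in (-r)..r, f x := by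
  rw [integral_cond_Icc (neg_le_self hr), smul_eq_mul, sub_neg_eq_add, two_mul, one_div]

end ProbabilityOnReal

section QuadraticForm

variable {m n R : Type*} [Fintype m] [Fintype n]

lemma star_dotProduct_mulVec_parallelogram [NonUnitalNonAssocRing R] [StarAddMonoid R]
    (M : Matrix n n R) (u v : n → R) :
    star (u + v) ⬝ᵥ M *ᵥ (u + v) + star (u - v) ⬝ᵥ M *ᵥ (u - v) =
      2 • (star u ⬝ᵥ M *ᵥ u + star v ⬝ᵥ M *ᵥ v) := by
  simp only [star_add, star_sub, mulVec_add, mulVec_sub, add_dotProduct, sub_dotProduct,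
    dotProduct_add, dotProduct_sub]
  abel

lemma star_dotProduct_mulVec_smul [CommSemiring R] [StarRing R] (M : Matrix n n R) (c : R)
    (v : n → R) :
    star (c • v) ⬝ᵥ M *ᵥ (c • v) = star c * c * (star v ⬝ᵥ M *ᵥ v) := by
  simp only [star_smul, mulVec_smul, smul_dotProduct, dotProduct_smul, smul_eq_mul]
  ring

lemma star_dotProduct_conjTranspose_mul_mul_mulVec [NonUnitalSemiring R] [StarRing R]
    (M : Matrix m m R) (A : Matrix m n R) (v : n → R) :
    star v ⬝ᵥ (Aᴴ * M * A) *ᵥ v = star (A *ᵥ v) ⬝ᵥ M *ᵥ (A *ᵥ v) := by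
  rw [star_mulVec, ← dotProduct_mulVec, mulVec_mulVec, mulVec_mulVec, Matrix.mul_assoc]

end QuadraticForm

section Rotation

variable {n : Type*} [DecidableEq n]

/-- The one-parameter gate `U(α) = cos α · I - i sin α · σ` with generator `σ`. It equals
`exp(-iασ)` when `σ ^ 2 = 1`; taking the trigonometric form as the definition gives it a meaning
for every matrix `σ`. -/
noncomputable def rotationGate (σ : Matrix n n ℂ) (α : ℝ) : Matrix n n ℂ :=
  (Real.cos α : ℂ) • (1 : Matrix n n ℂ) - (Complex.I * (Real.sin α : ℂ)) • σ

/-- The expectation value `⟨ψ, U(α)† ρ U(α) ψ⟩` as a function of the gate angle. Its real part is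
taken so that it is a real random variable for every matrix `ρ`; for Hermitian `ρ` nothing is
lost. -/
noncomputable def rotatedExpectation [Fintype n] (σ ρ : Matrix n n ℂ) (ψ : n → ℂ) (α : ℝ) : ℝ :=
  (star ψ ⬝ᵥ (((rotationGate σ α)ᴴ * ρ * rotationGate σ α) *ᵥ ψ)).re

lemma continuous_rotationGate (σ : Matrix n n ℂ) : Continuous (rotationGate σ) := by
  unfold rotationGate
  fun_prop

lemma periodic_rotationGate (σ : Matrix n n ℂ) :
    Function.Periodic (rotationGate σ) (2 * Real.pi) := fun α => by
  simp only [rotationGate, Real.cos_add_two_pi, Real.sin_add_two_pi]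

variable [Fintype n] (σ ρ : Matrix n n ℂ) (ψ : n → ℂ)

lemma rotationGate_mulVec (α : ℝ) :
    rotationGate σ α *ᵥ ψ =
      (Real.cos α : ℂ) • ψ - (Complex.I * (Real.sin α : ℂ)) • (σ *ᵥ ψ) := by
  rw [rotationGate, sub_mulVec, smul_mulVec, smul_mulVec, one_mulVec]

lemma rotationGate_neg_mulVec (α : ℝ) :
    rotationGate σ (-α) *ᵥ ψ =
      (Real.cos α : ℂ) • ψ + (Complex.I * (Real.sin α : ℂ)) • (σ *ᵥ ψ) := by
  rw [rotationGate_mulVec, Real.cos_neg, Real.sin_neg, Complex.ofReal_neg, mul_neg, neg_smul,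
    sub_neg_eq_add]

lemma memLp_rotatedExpectation (ν : Measure ℝ) [IsFiniteMeasure ν] (p : ENNReal) :
    MemLp (rotatedExpectation σ ρ ψ) p ν := by
  have hgate := continuous_rotationGate σ
  refine memLp_of_continuous_of_periodic ?_ (fun α => ?_) Real.two_pi_pos.ne' ν p
  · unfold rotatedExpectation
    fun_prop
  · simp only [rotatedExpectation, periodic_rotationGate σ α]

lemma rotatedExpectation_add_neg (α : ℝ) :
    rotatedExpectation σ ρ ψ α + rotatedExpectation σ ρ ψ (-α) =
      2 * (Real.cos α ^ 2 * (star ψ ⬝ᵥ (ρ *ᵥ ψ)).re +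
        Real.sin α ^ 2 * (star ψ ⬝ᵥ ((σᴴ * ρ * σ) *ᵥ ψ)).re) := by
  have hcos : star (Real.cos α : ℂ) * (Real.cos α : ℂ) = (Real.cos α ^ 2 : ℝ) := by
    rw [Complex.star_def, Complex.conj_ofReal, ← Complex.ofReal_mul, sq]
  have hsin : star (Complex.I * (Real.sin α : ℂ)) * (Complex.I * (Real.sin α : ℂ)) =
      (Real.sin α ^ 2 : ℝ) := by
    rw [Complex.star_def, Complex.conj_mul', norm_mul, Complex.norm_I, one_mul,
      Complex.norm_real, Real.norm_eq_abs, ← Complex.ofReal_pow, sq_abs]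
  simp only [rotatedExpectation, star_dotProduct_conjTranspose_mul_mul_mulVec]
  rw [rotationGate_mulVec, rotationGate_neg_mulVec, add_comm, ← Complex.add_re,
    star_dotProduct_mulVec_parallelogram, star_dotProduct_mulVec_smul,
    star_dotProduct_mulVec_smul, hcos, hsin, Complex.re_nsmul,
    Complex.add_re, Complex.re_ofReal_mul, Complex.re_ofReal_mul, nsmul_eq_mul, Nat.cast_ofNat]

lemma rotatedExpectation_even_part (α : ℝ) :
    2⁻¹ * (rotatedExpectation σ ρ ψ α + rotatedExpectation σ ρ ψ (-α)) =
      ((star ψ ⬝ᵥ (ρ *ᵥ ψ)).re - (star ψ ⬝ᵥ ((σᴴ * ρ * σ) *ᵥ ψ)).re) * Real.cos α ^ 2 +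
        (star ψ ⬝ᵥ ((σᴴ * ρ * σ) *ᵥ ψ)).re := by
  rw [rotatedExpectation_add_neg, Real.sin_sq]
  ring

end Rotation

theorem variance_final_step_general {n : Type*} [Fintype n] [DecidableEq n]
    (σ ρ : Matrix n n ℂ) (ψ : n → ℂ)
    (ν : Measure ℝ) [IsProbabilityMeasure ν] [ν.IsNegInvariant] :
    (∫ α, Real.cos α ^ 4 ∂ν - (∫ α, Real.cos α ^ 2 ∂ν) ^ 2) *
      ((star ψ ⬝ᵥ (ρ *ᵥ ψ)).re - (star ψ ⬝ᵥ ((σᴴ * ρ * σ) *ᵥ ψ)).re) ^ 2 ≤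
    Var[rotatedExpectation σ ρ ψ; ν] := by
  set A := (star ψ ⬝ᵥ (ρ *ᵥ ψ)).re
  set B := (star ψ ⬝ᵥ ((σᴴ * ρ * σ) *ᵥ ψ)).re
  calc (∫ α, Real.cos α ^ 4 ∂ν - (∫ α, Real.cos α ^ 2 ∂ν) ^ 2) * (A - B) ^ 2
      = Var[fun α => (A - B) * Real.cos α ^ 2 + B; ν] := by
        rw [variance_add_const (by fun_prop), variance_const_mul, variance_cos_sq, mul_comm]
    _ = Var[fun α => 2⁻¹ * (rotatedExpectation σ ρ ψ α + rotatedExpectation σ ρ ψ (-α)); ν] := by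
        simp only [rotatedExpectation_even_part, A, B]
    _ ≤ Var[rotatedExpectation σ ρ ψ; ν] :=
        variance_midpoint_comp_le (Measure.measurePreserving_neg ν)
          (memLp_rotatedExpectation σ ρ ψ ν 2)

/-- **Final integration step of the warm-start bound.** For a Hermitian involution `σ`, a
positive semidefinite `ρ`, and a unit vector `ψ`, the variance over `α` uniform on `[−r, r]` of
`α ↦ ⟨ψ, U(α)† ρ U(α) ψ⟩` with `U(α) = cos α·I − i sin α·σ` is at least
`(c₊ − k₊²)(⟨ψ, ρψ⟩ − ⟨ψ, σρσψ⟩)²`. -/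
theorem variance_final_step {N : ℕ} (σ ρ : Matrix (Fin N) (Fin N) ℂ)
    (hσ : σ.IsHermitian) (hσ2 : σ * σ = 1) (hρ : ρ.PosSemidef)
    (ψ : Fin N → ℂ) (hψ : star ψ ⬝ᵥ ψ = 1) (r : ℝ) (hr : 0 < r)
    (ν : Measure ℝ)
    (hν : ν = (ENNReal.ofReal (2 * r))⁻¹ • volume.restrict (Set.Icc (-r) r))
    (U : ℝ → Matrix (Fin N) (Fin N) ℂ)
    (hU : ∀ α, U α = (Real.cos α : ℂ) • (1 : Matrix (Fin N) (Fin N) ℂ)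
      - (Complex.I * (Real.sin α : ℂ)) • σ) :
    (((1 / (2 * r)) * ∫ α in (-r)..r, Real.cos α ^ 4) -
        ((1 / (2 * r)) * ∫ α in (-r)..r, Real.cos α ^ 2) ^ 2) *
      ((star ψ ⬝ᵥ (ρ *ᵥ ψ)).re - (star ψ ⬝ᵥ ((σ * ρ * σ) *ᵥ ψ)).re) ^ 2 ≤
    variance (fun α => (star ψ ⬝ᵥ (((U α)ᴴ * ρ * U α) *ᵥ ψ)).re) ν := by
  have := isProbabilityMeasure_cond_Icc (neg_lt_self hr)
  rw [hν, ← cond_Icc_neg_self, funext hU]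
  simpa only [integral_cond_Icc_neg_self hr.le, hσ.eq] using!
    variance_final_step_general σ ρ ψ volume[|Set.Icc (-r) r]
end
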